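/- Let ρ = Σ_{a=1}^n p_a Π_a and σ as above with d_HS(ρ,σ) ≤ δ < Δ/(1+√d). If |p_a − s_k| ≤ δ, then |p_a − ⟨ψ_k|ρ|ψ_k⟩| ≤ (4(d−1)/Δ) δ². -/

import Mathlib

open Matrix

lemma aux_quad {d : ℕ} {A : Matrix (Fin d) (Fin d) ℂ} (hA : A.IsHermitian) (v : Fin d → ℂ) :
    star v ⬝ᵥ (A * A).mulVec v = star (A.mulVec v) ⬝ᵥ A.mulVec v := by
  rw [star_mulVec, hA.eq, ← mulVec_mulVec, dotProduct_mulVec]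

lemma aux_nonneg {d : ℕ} (v : Fin d → ℂ) : 0 ≤ (star v ⬝ᵥ v).re := by
  simp only [dotProduct, Pi.star_apply, Complex.re_sum]
  refine Finset.sum_nonneg fun i _ => ?_
  simp only [Complex.star_def, Complex.mul_re, Complex.conj_re, Complex.conj_im]
  nlinarith [mul_self_nonneg (v i).re, mul_self_nonneg (v i).im]

lemma aux_trace {d : ℕ} {A : Matrix (Fin d) (Fin d) ℂ} (hA : A.IsHermitian)
    (ψ : Fin d → (Fin d → ℂ))
    (hψ : ∀ k l, star (ψ k) ⬝ᵥ ψ l = if k = l then 1 else 0) (k : Fin d) :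
    (star (A.mulVec (ψ k)) ⬝ᵥ A.mulVec (ψ k)).re ≤ (A * A).trace.re := by
  let U : Matrix (Fin d) (Fin d) ℂ := Matrix.of fun i l => ψ l i
  have hU : Uᴴ * U = 1 := by
    ext i j
    have := hψ i j
    simp only [dotProduct, Pi.star_apply, Complex.star_def] at this
    simp [Matrix.mul_apply, U, Matrix.one_apply, this]
  have hU' : U * Uᴴ = 1 := mul_eq_one_comm.mp hU
  have h1 : (A * A).trace = (Uᴴ * (A * A * U)).trace := by
    rw [Matrix.trace_mul_comm Uᴴ, Matrix.mul_assoc (A * A), hU', Matrix.mul_one]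
  have h2 : (Uᴴ * (A * A * U)).trace = ∑ l, star (ψ l) ⬝ᵥ (A * A).mulVec (ψ l) := by
    unfold Matrix.trace
    refine Finset.sum_congr rfl fun l _ => ?_
    simp only [Matrix.diag_apply]
    rw [Matrix.mul_apply]
    rfl
  rw [h1, h2, Complex.re_sum]
  simp_rw [aux_quad hA]
  exact Finset.single_le_sum
    (f := fun l => (star (A.mulVec (ψ l)) ⬝ᵥ A.mulVec (ψ l)).re)
    (fun l _ => aux_nonneg _) (Finset.mem_univ k)

theorem stmt_11 (d n : ℕ)
    (P : Fin n → Matrix (Fin d) (Fin d) ℂ)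
    (hPh : ∀ a, (P a).IsHermitian)
    (hPo : ∀ a b, P a * P b = if a = b then P a else 0)
    (hP1 : ∑ a, P a = 1)
    (p : Fin n → ℝ) (hpinj : Function.Injective p)
    (ψ : Fin d → (Fin d → ℂ))
    (hψ : ∀ k l, star (ψ k) ⬝ᵥ ψ l = if k = l then 1 else 0)
    (s : Fin d → ℝ)
    (ρ σ : Matrix (Fin d) (Fin d) ℂ)
    (hρ : ρ = ∑ a, (p a : ℂ) • P a)
    (hσ : σ = ∑ k, (s k : ℂ) • vecMulVec (ψ k) (star (ψ k)))
    (δ : ℝ) (hδ0 : 0 ≤ δ)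
    (hdist : Real.sqrt (((ρ - σ) * (ρ - σ)).trace.re) ≤ δ)
    (hn : 2 ≤ n)
    (Δ : ℝ) (hΔ : ∀ a b, a ≠ b → Δ ≤ |p a - p b|)
    (hΔex : ∃ a b, a ≠ b ∧ Δ = |p a - p b|)
    (hδΔ : δ < Δ / (1 + Real.sqrt d)) :
    ∀ a k, |p a - s k| ≤ δ →
      |p a - (star (ψ k) ⬝ᵥ ρ.mulVec (ψ k)).re| ≤ (4 * (d - 1) / Δ) * δ ^ 2 := by
  intro a k hk
  have hd1 : 1 ≤ d := by have := k.2; omega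
  have hsq : (1:ℝ) ≤ Real.sqrt d := by
    rw [Real.one_le_sqrt]; exact_mod_cast hd1
  have hδ2 : 2 * δ < Δ := by
    rw [lt_div_iff₀ (by linarith)] at hδΔ
    nlinarith
  have hΔ0 : 0 < Δ := by linarith
  set v := ψ k with hv
  let w : Fin n → ℝ := fun b => (star v ⬝ᵥ (P b).mulVec v).re
  have hidem : ∀ b, P b * P b = P b := fun b => by simpa using hPo b b
  have hw0 : ∀ b, 0 ≤ w b := by
    intro b
    have := aux_quad (hPh b) v
    rw [hidem] at this
    simp only [w, this]
    exact aux_nonneg _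
  have hlin : ∀ c : Fin n → ℝ,
      (star v ⬝ᵥ (∑ b, (c b : ℂ) • P b).mulVec v).re = ∑ b, c b * w b := by
    intro c
    rw [Matrix.sum_mulVec, dotProduct_sum, Complex.re_sum]
    refine Finset.sum_congr rfl fun b _ => ?_
    rw [Matrix.smul_mulVec, dotProduct_smul, smul_eq_mul, Complex.re_ofReal_mul]
  have hw1 : ∑ b, w b = 1 := by
    have := hlin (fun _ => 1)
    simp only [Complex.ofReal_one, one_smul, hP1, Matrix.one_mulVec, one_mul] at this
    rw [← this, hv, hψ]; simp
  have hherm : ∀ c : Fin n → ℝ, (∑ b, (c b : ℂ) • P b).IsHermitian := by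
    intro c
    unfold Matrix.IsHermitian
    rw [Matrix.conjTranspose_sum]
    refine Finset.sum_congr rfl fun b _ => ?_
    rw [Matrix.conjTranspose_smul, (hPh b).eq]
    simp
  have hσh : σ.IsHermitian := by
    rw [hσ]
    unfold Matrix.IsHermitian
    rw [Matrix.conjTranspose_sum]
    refine Finset.sum_congr rfl fun b _ => ?_
    rw [Matrix.conjTranspose_smul, Matrix.conjTranspose_vecMulVec]
    simp
  have hσv : σ.mulVec v = (s k : ℂ) • v := by
    rw [hσ, Matrix.sum_mulVec, Finset.sum_eq_single k]
    · rw [Matrix.smul_mulVec, Matrix.vecMulVec_mulVec, hv, hψ]; simp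
    · intro l _ hl
      rw [Matrix.smul_mulVec, Matrix.vecMulVec_mulVec, hv, hψ]; simp [hl]
    · simp
  let B : Matrix (Fin d) (Fin d) ℂ := ∑ b, ((p b - s k : ℝ) : ℂ) • P b
  have hB : B = ρ - (s k : ℂ) • 1 := by
    simp only [B, hρ, ← hP1, Finset.smul_sum, ← Finset.sum_sub_distrib, ← sub_smul,
      Complex.ofReal_sub]
  have hBB : B * B = ∑ b, (((p b - s k) ^ 2 : ℝ) : ℂ) • P b := by
    simp only [B, Finset.sum_mul, Finset.mul_sum, Matrix.smul_mul, Matrix.mul_smul, hPo]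
    refine Finset.sum_congr rfl fun b _ => ?_
    simp [smul_smul, sq]
  have hAv : (ρ - σ).mulVec v = B.mulVec v := by
    rw [hB, Matrix.sub_mulVec, Matrix.sub_mulVec, hσv, Matrix.smul_mulVec, Matrix.one_mulVec]
  have hρh : ρ.IsHermitian := hρ ▸ hherm p
  have hmain : ∑ b, (p b - s k) ^ 2 * w b ≤ δ ^ 2 := by
    have h1 := aux_trace (hρh.sub hσh) ψ hψ k
    rw [← hv, hAv, ← aux_quad (hherm _), hBB, hlin] at h1
    exact h1.trans (Real.sqrt_le_iff.mp hdist).2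
  have hval : p a - (star v ⬝ᵥ ρ.mulVec v).re = ∑ b, (p a - p b) * w b := by
    rw [hρ, hlin]
    simp only [sub_mul, Finset.sum_sub_distrib, ← Finset.mul_sum, hw1, mul_one]
  rw [hval]
  have hgap : ∀ b, b ≠ a → |p a - p b| / 2 ≤ |p b - s k| ∧ Δ - δ ≤ |p b - s k| := by
    intro b hb
    have h1 := hΔ a b hb.symm
    have h2 : |p a - p b| ≤ |p a - s k| + |p b - s k| := by
      have := abs_sub_le (p a) (s k) (p b)
      rwa [abs_sub_comm (s k) (p b)] at this
    constructor <;> linarith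
  rcases Nat.lt_or_ge 1 d with hd | hd
  · have hd' : (2:ℝ) ≤ d := by exact_mod_cast hd
    have hb : |∑ b, (p a - p b) * w b| ≤ 4 / Δ * δ ^ 2 := by
      calc |∑ b, (p a - p b) * w b| ≤ ∑ b, |(p a - p b) * w b| := Finset.abs_sum_le_sum_abs _ _
        _ ≤ ∑ b, 4 / Δ * ((p b - s k) ^ 2 * w b) := by
          refine Finset.sum_le_sum fun b _ => ?_
          rw [abs_mul, abs_of_nonneg (hw0 b), ← mul_assoc]
          refine mul_le_mul_of_nonneg_right ?_ (hw0 b)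
          by_cases hba : b = a
          · subst hba; simp; positivity
          · have h1 := (hgap b hba).1
            have h2 := hΔ a b (Ne.symm hba)
            rw [div_mul_eq_mul_div, le_div_iff₀ hΔ0, ← sq_abs (p b - s k)]
            nlinarith [abs_nonneg (p a - p b)]
        _ = 4 / Δ * ∑ b, (p b - s k) ^ 2 * w b := by rw [Finset.mul_sum]
        _ ≤ _ := by gcongr
    refine hb.trans ?_
    gcongr
    linarith
  · obtain rfl : d = 1 := by omega
    have hz : ∀ b, b ≠ a → w b = 0 := by
      intro b hb
      have hww : w b = (P b 0 0).re ∧ (P b 0 0 = 0 ∨ P b 0 0 = 1) := by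
        constructor
        · have h1 : star (v 0) * v 0 = 1 := by
            have := hψ k k
            simpa [dotProduct] using this
          have : star v ⬝ᵥ (P b).mulVec v = P b 0 0 * (star (v 0) * v 0) := by
            simp [dotProduct, Matrix.mulVec]; ring
          simp only [w, this, h1, mul_one]
        · have := congrFun (congrFun (hidem b) 0) 0
          rw [Matrix.mul_apply] at this
          simp only [Fin.sum_univ_one] at this
          have h3 : P b 0 0 * (P b 0 0 - 1) = 0 := by linear_combination this
          rcases mul_eq_zero.mp h3 with h | h
          · exact Or.inl h
          · exact Or.inr (by linear_combination h)
      obtain ⟨h1, h2 | h2⟩ := hww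
      · rw [h1, h2]; simp
      · exfalso
        have hwb : w b = 1 := by rw [h1, h2]; simp
        have h3 : (p b - s k) ^ 2 * w b ≤ ∑ b, (p b - s k) ^ 2 * w b :=
          Finset.single_le_sum (f := fun b => (p b - s k) ^ 2 * w b)
            (fun l _ => mul_nonneg (sq_nonneg _) (hw0 l)) (Finset.mem_univ b)
        rw [hwb, mul_one] at h3
        have h4 := abs_le_of_sq_le_sq (h3.trans hmain) hδ0
        have h5 := (hgap b hb).2
        linarith
    have : ∑ b, (p a - p b) * w b = 0 := by
      refine Finset.sum_eq_zero fun b _ => ?_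
      by_cases hb : b = a
      · rw [hb]; simp
      · rw [hz b hb, mul_zero]
    rw [this]; simp
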